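/- arXiv:1710.00303 — 2 statements merged into one kernel-verified Lean document; each statement's English description precedes it below -/
import Mathlib

section
/- Let g : A → B be a finite homomorphism of commutative Noetherian rings, let p ≥ 0 be an integer, and let M be a finitely generated B-module such that for every prime ideal q of B with M_q ≠ 0 one has height q ≥ p. Then, regarding M as an A-module via g, for every prime ideal 𝔭 of A with M_𝔭 ≠ 0 one has height 𝔭 ≥ p. (In other words, pushforward along a finite ring map preserves the property of being supported in codimension at least p.) -/
/-!
Lying over, applied to the annihilator in `B` of an element of `M`, shows that every prime in the
support of `M` over `A` is the contraction of one in the support over `B`. By incomparability,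
contraction along an integral map preserves strict inclusions of primes, so chains below a prime
contract to chains of the same length and the height cannot drop.
-/

section

variable {A B : Type*} [CommRing A] [CommRing B] [Algebra A B] [Algebra.IsIntegral A B]

theorem support_eq_image_comap_support_of_isIntegral (M : Type*) [AddCommGroup M] [Module A M]
    [Module B M] [IsScalarTower A B M] :
    Module.support A M = PrimeSpectrum.comap (algebraMap A B) '' Module.support B M := by
  refine Set.Subset.antisymm ?_ (Set.image_subset_iff.mpr Module.support_subset_preimage_comap)
  intro 𝔭 h𝔭
  obtain ⟨m, hm⟩ := Module.mem_support_iff_exists_annihilator.mp h𝔭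
  have comap_annihilator_le :
      (Submodule.span B {m}).annihilator.comap (algebraMap A B) ≤ 𝔭.asIdeal := by
    intro a ha
    apply hm
    rw [Ideal.mem_comap, Submodule.mem_annihilator_span_singleton, algebraMap_smul] at ha
    exact (Submodule.mem_annihilator_span_singleton m a).mpr ha
  obtain ⟨q, annihilator_le, hq, comap_eq⟩ :=
    Ideal.exists_ideal_over_prime_of_isIntegral 𝔭.asIdeal _ comap_annihilator_le
  exact ⟨⟨q, hq⟩, Module.mem_support_iff_exists_annihilator.mpr ⟨m, annihilator_le⟩,
    PrimeSpectrum.ext comap_eq⟩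

variable (A) in
theorem height_le_height_comap_of_isIntegral (q : Ideal B) [q.IsPrime] :
    q.height ≤ (q.comap (algebraMap A B)).height := by
  have comap_strictMono : StrictMono (PrimeSpectrum.comap (algebraMap A B)) :=
    fun _ _ hlt ↦ Ideal.IsIntegral.comap_lt_comap hlt
  simpa only [← PrimeSpectrum.height_eq_orderHeight, PrimeSpectrum.comap_asIdeal] using
    Order.height_le_height_apply_of_strictMono _ comap_strictMono ⟨q, ‹q.IsPrime›⟩

variable (A) in
theorem ringKrullDim_atPrime_le_comap_of_isIntegral (q : Ideal B) [q.IsPrime] :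
    ringKrullDim (Localization.AtPrime q) ≤
      ringKrullDim (Localization.AtPrime (q.comap (algebraMap A B))) := by
  rw [IsLocalization.AtPrime.ringKrullDim_eq_height q,
    IsLocalization.AtPrime.ringKrullDim_eq_height (q.comap (algebraMap A B))]
  exact WithBot.coe_le_coe.mpr (height_le_height_comap_of_isIntegral A q)

end

theorem finite_pushforward_preserves_coniveau_general
    {A B : Type*} [CommRing A] [CommRing B] (g : A →+* B) (hg : g.IsIntegral) (p : WithBot ℕ∞)
    (M : Type*) [AddCommGroup M] [Module B M]
    (hsupp : ∀ (q : Ideal B) (hq : q.IsPrime),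
      haveI := hq
      Nontrivial (LocalizedModule q.primeCompl M) →
        p ≤ ringKrullDim (Localization.AtPrime q)) :
    ∀ (𝔭 : Ideal A) (h𝔭 : 𝔭.IsPrime),
      haveI := h𝔭
      letI : Module A M := Module.compHom M g
      Nontrivial (LocalizedModule 𝔭.primeCompl M) →
        p ≤ ringKrullDim (Localization.AtPrime 𝔭) := by
  intro 𝔭 h𝔭
  let : Algebra A B := g.toAlgebra
  let : Module A M := Module.compHom M g
  have : IsScalarTower A B M := .of_algebraMap_smul fun _ _ ↦ rfl
  have : Algebra.IsIntegral A B := ⟨hg⟩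
  intro h𝔭M
  have mem_support : (⟨𝔭, h𝔭⟩ : PrimeSpectrum A) ∈ Module.support A M := h𝔭M
  rw [support_eq_image_comap_support_of_isIntegral (B := B)] at mem_support
  obtain ⟨q, hqM, comap_eq⟩ := mem_support
  obtain rfl : q.asIdeal.comap (algebraMap A B) = 𝔭 := congrArg PrimeSpectrum.asIdeal comap_eq
  exact (hsupp q.asIdeal q.isPrime hqM).trans
    (ringKrullDim_atPrime_le_comap_of_isIntegral A q.asIdeal)

/-- **Pushforward along a finite ring map preserves support in codimension ≥ p.**
Let `g : A → B` be a finite homomorphism of commutative Noetherian rings, `p ≥ 0` an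
integer, and `M` a finitely generated `B`-module all of whose support primes `q`
satisfy `height q ≥ p` (where the height of a prime is the Krull dimension of the
localization at it).  Then, regarding `M` as an `A`-module via `g`, every prime `𝔭`
of `A` with `M_𝔭 ≠ 0` satisfies `height 𝔭 ≥ p`. -/
theorem finite_pushforward_preserves_coniveau
    {A B : Type*} [CommRing A] [CommRing B] [IsNoetherianRing A] [IsNoetherianRing B]
    (g : A →+* B) (hg : g.Finite) (p : ℕ)
    (M : Type*) [AddCommGroup M] [Module B M] [Module.Finite B M]
    (hsupp : ∀ (q : Ideal B) (hq : q.IsPrime),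
      haveI := hq
      Nontrivial (LocalizedModule q.primeCompl M) →
        (p : WithBot (WithTop ℕ)) ≤ ringKrullDim (Localization.AtPrime q)) :
    ∀ (𝔭 : Ideal A) (h𝔭 : 𝔭.IsPrime),
      haveI := h𝔭
      letI : Module A M := Module.compHom M g
      Nontrivial (LocalizedModule 𝔭.primeCompl M) →
        (p : WithBot (WithTop ℕ)) ≤ ringKrullDim (Localization.AtPrime 𝔭) := by
  exact finite_pushforward_preserves_coniveau_general g hg.to_isIntegral p M hsupp
end

section
/- Let (R, m_R) → (A, m_A) be a flat local homomorphism of Noetherian local rings such that q := m_R·A is a prime ideal of A. Then the height of q equals dim R, every element f ∈ m_A − q is a nonzerodivisor on A, and for every such f the induced map R → A/fA is flat. -/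
/-!
Multiplication by `f` is injective on `A ⊗ R/m`. As `A` is flat, injectivity passes through
extensions, hence to `A ⊗ P` for every `P` of finite length, in particular for `P = R/(I + mⁿ)`;
Krull's intersection theorem on `A/IA` then gives it for `P = R/I`, with `I` arbitrary. The case
`I = 0` says that `f` is a nonzerodivisor, and a snake chase over all `I` gives flatness of `A/fA`.

By going down, the height of `q` is `dim R` plus the height of the image of `q` in `A/mA = A/q`,
which is `0`.
-/

open IsLocalRing LinearMap TensorProduct

section QuotientTensor

variable {R N M : Type*} [CommRing R] [AddCommGroup N] [Module R N] [AddCommGroup M] [Module R M]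

lemma tmul_one_quotient_eq_zero_iff {I : Ideal R} {x : M} :
    x ⊗ₜ[R] (1 : R ⧸ I) = 0 ↔ x ∈ (I • ⊤ : Submodule R M) := by
  rw [← (tensorQuotEquivQuotSMul M I).map_eq_zero_iff, ← Submodule.Quotient.mk_eq_zero]
  simp [tensorQuotEquivQuotSMul]

lemma exists_tmul_one_quotient_eq (I : Ideal R) (z : M ⊗[R] (R ⧸ I)) :
    ∃ x : M, x ⊗ₜ[R] (1 : R ⧸ I) = z := by
  obtain ⟨x, hx⟩ := Submodule.Quotient.mk_surjective _ (tensorQuotEquivQuotSMul M I z)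
  refine ⟨x, (tensorQuotEquivQuotSMul M I).injective ?_⟩
  rw [← hx]
  simp [tensorQuotEquivQuotSMul]

lemma rTensor_lTensor_comm (u : N →ₗ[R] M) {P Q : Type*} [AddCommGroup P] [Module R P]
    [AddCommGroup Q] [Module R Q] (g : P →ₗ[R] Q) (z : N ⊗[R] P) :
    u.rTensor Q (g.lTensor N z) = g.lTensor M (u.rTensor P z) := by
  rw [← comp_apply, rTensor_comp_lTensor, ← lTensor_comp_rTensor, comp_apply]

lemma injective_rTensor_quotient_iff (u : N →ₗ[R] M) (I : Ideal R) :
    Function.Injective (u.rTensor (R ⧸ I)) ↔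
      (I • ⊤ : Submodule R M).comap u ≤ (I • ⊤ : Submodule R N) := by
  rw [injective_iff_map_eq_zero, SetLike.le_def]
  constructor
  · intro h x hx
    exact tmul_one_quotient_eq_zero_iff.mp <| h _ <| tmul_one_quotient_eq_zero_iff.mpr hx
  · intro h z hz
    obtain ⟨x, rfl⟩ := exists_tmul_one_quotient_eq I z
    exact tmul_one_quotient_eq_zero_iff.mpr <| h <| tmul_one_quotient_eq_zero_iff.mp hz

lemma injective_rTensor_of_submodule_of_quotient [Module.Flat R M] (u : N →ₗ[R] M) {P : Type*}
    [AddCommGroup P] [Module R P] (S : Submodule R P) (hS : Function.Injective (u.rTensor S))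
    (hQ : Function.Injective (u.rTensor (P ⧸ S))) : Function.Injective (u.rTensor P) := by
  rw [injective_iff_map_eq_zero] at hS hQ ⊢
  intro x hx
  have hxQ : S.mkQ.lTensor N x = 0 := hQ _ <| by
    rw [rTensor_lTensor_comm, hx, map_zero]
  obtain ⟨y, rfl⟩ := (lTensor_exact N (exact_subtype_mkQ S) S.mkQ_surjective x).mp hxQ
  have huy : u.rTensor S y = 0 :=
    (map_eq_zero_iff _ (Module.Flat.lTensor_preserves_injective_linearMap (M := M) S.subtype
      S.injective_subtype)).mp <| by
    rwa [← rTensor_lTensor_comm]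
  rw [hS y huy, map_zero]

lemma injective_rTensor_of_isFiniteLength [Module.Flat R M] (u : N →ₗ[R] M)
    (hu : ∀ m : Ideal R, m.IsMaximal → Function.Injective (u.rTensor (R ⧸ m))) {P : Type*}
    [AddCommGroup P] [Module R P] (hP : IsFiniteLength R P) :
    Function.Injective (u.rTensor P) := by
  induction hP with
  | of_subsingleton => exact Function.injective_of_subsingleton _
  | @of_simple_quotient P _ _ S _ _ ih =>
    refine injective_rTensor_of_submodule_of_quotient u S ih ?_
    obtain ⟨m, hm, ⟨e⟩⟩ := isSimpleModule_iff_quot_maximal.mp ‹IsSimpleModule R (P ⧸ S)›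
    refine .of_comp (f := e.toLinearMap.lTensor M) ?_
    have hcomm : e.toLinearMap.lTensor M ∘ u.rTensor (P ⧸ S) =
        u.rTensor (R ⧸ m) ∘ e.toLinearMap.lTensor N :=
      funext fun z ↦ (rTensor_lTensor_comm u e.toLinearMap z).symm
    rw [hcomm]
    exact (hu m hm).comp (e.lTensor N).injective

lemma flat_of_exact_of_injective_rTensor_quotient [Module.Flat R M] {C : Type*} [AddCommGroup C]
    [Module R C] {u : N →ₗ[R] M} {v : M →ₗ[R] C} (huv : Function.Exact u v)
    (hv : Function.Surjective v)
    (hu : ∀ I : Ideal R, Function.Injective (u.rTensor (R ⧸ I))) : Module.Flat R C := by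
  rw [Module.Flat.iff_lTensor_injective']
  intro I
  rw [injective_iff_map_eq_zero]
  intro c hc
  obtain ⟨y, rfl⟩ := rTensor_surjective I hv c
  have hy : v.rTensor R (I.subtype.lTensor M y) = 0 := by
    rwa [rTensor_lTensor_comm]
  obtain ⟨x, hx⟩ := (rTensor_exact R huv hv _).mp hy
  have hxI : (Submodule.mkQ I).lTensor N x = 0 := (injective_iff_map_eq_zero _).mp (hu I) _ <| by
    rw [rTensor_lTensor_comm, hx]
    exact (lTensor_exact M (exact_subtype_mkQ I) (Submodule.mkQ_surjective I)).apply_apply_eq_zero y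
  obtain ⟨w, rfl⟩ :=
    (lTensor_exact N (exact_subtype_mkQ I) (Submodule.mkQ_surjective I) x).mp hxI
  have hwy : u.rTensor I w = y :=
    Module.Flat.lTensor_preserves_injective_linearMap (M := M) I.subtype I.injective_subtype <| by
      rw [← hx, rTensor_lTensor_comm]
  rw [← hwy]
  exact (rTensor_exact I huv hv).apply_apply_eq_zero w

end QuotientTensor

lemma isFiniteLength_quotient_of_maximalIdeal_pow_le {R : Type*} [CommRing R] [IsNoetherianRing R]
    [IsLocalRing R] {I : Ideal R} {n : ℕ} (hn : maximalIdeal R ^ n ≤ I) :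
    IsFiniteLength R (R ⧸ I) := by
  rcases eq_or_ne I ⊤ with rfl | hI
  · exact .of_subsingleton
  have hmin : maximalIdeal R ∈ I.minimalPrimes :=
    ⟨⟨inferInstance, le_maximalIdeal hI⟩, fun p hp _ ↦ hp.1.le_of_pow_le (hn.trans hp.2)⟩
  have := quotient_artinian_of_mem_minimalPrimes_of_isLocalRing I hmin
  exact isFiniteLength_iff_isNoetherian_isArtinian.mpr ⟨inferInstance,
    isArtinian_of_surjective_algebraMap (Ideal.Quotient.mk_surjective (I := I))⟩

lemma iInf_sup_pow_smul_top_eq {A N : Type*} [CommRing A] [IsNoetherianRing A] [AddCommGroup N]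
    [Module A N] [Module.Finite A N] {J : Ideal A} (hJ : J ≤ Ideal.jacobson ⊥)
    (K : Submodule A N) : ⨅ n : ℕ, K ⊔ J ^ n • ⊤ = K := by
  have h : ∀ n : ℕ, K ⊔ J ^ n • ⊤ = (J ^ n • ⊤ : Submodule A (N ⧸ K)).comap K.mkQ := fun n ↦ by
    rw [← K.range_mkQ, ← Submodule.map_top, ← Submodule.map_smul'', Submodule.comap_map_mkQ]
  simp_rw [h]
  rw [← Submodule.comap_iInf, Ideal.iInf_pow_smul_eq_bot_of_le_jacobson J hJ,
    Submodule.comap_bot, Submodule.ker_mkQ]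

theorem injective_rTensor_quotient_of_maximalIdeal {R A N M : Type*} [CommRing R]
    [IsNoetherianRing R] [IsLocalRing R] [CommRing A] [IsNoetherianRing A] [Algebra R A]
    [AddCommGroup N] [Module R N] [Module A N] [IsScalarTower R A N] [Module.Finite A N]
    [AddCommGroup M] [Module R M] [Module.Flat R M] (u : N →ₗ[R] M)
    (hmA : (maximalIdeal R).map (algebraMap R A) ≤ Ideal.jacobson ⊥)
    (hu : Function.Injective (u.rTensor (R ⧸ maximalIdeal R))) (I : Ideal R) :
    Function.Injective (u.rTensor (R ⧸ I)) := by
  have hpow (n : ℕ) : Function.Injective (u.rTensor (R ⧸ (I ⊔ maximalIdeal R ^ n))) :=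
    injective_rTensor_of_isFiniteLength u (fun m hm ↦ eq_maximalIdeal hm ▸ hu)
      (isFiniteLength_quotient_of_maximalIdeal_pow_le le_sup_right)
  rw [injective_rTensor_quotient_iff]
  have hsmul (J : Ideal R) : (J • ⊤ : Submodule R N) =
      (J.map (algebraMap R A) • ⊤ : Submodule A N).restrictScalars R :=
    (Ideal.smul_restrictScalars J ⊤).symm
  intro x hx
  rw [hsmul, Submodule.restrictScalars_mem,
    ← iInf_sup_pow_smul_top_eq hmA (I.map (algebraMap R A) • ⊤), Submodule.mem_iInf]
  intro n
  have hxn : x ∈ ((I ⊔ maximalIdeal R ^ n) • ⊤ : Submodule R N) :=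
    (injective_rTensor_quotient_iff u _).mp (hpow n) <|
      Submodule.smul_mono_left le_sup_left hx
  rwa [hsmul, Ideal.map_sup, Ideal.map_pow, Submodule.sup_smul] at hxn

section NonZeroDivisor

variable {R A : Type*} [CommRing R] [CommRing A] [Algebra R A]

lemma injective_rTensor_mulLeft_quotient_iff (f : A) (I : Ideal R) :
    Function.Injective ((mulLeft R f).rTensor (R ⧸ I)) ↔
      Ideal.Quotient.mk (I.map (algebraMap R A)) f ∈ nonZeroDivisors _ := by
  rw [injective_rTensor_quotient_iff, Ideal.smul_top_eq_map, mem_nonZeroDivisors_iff_left,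
    Ideal.Quotient.mk_surjective.forall]
  simp_rw [← map_mul, Ideal.Quotient.eq_zero_iff_mem]
  rfl

variable [IsNoetherianRing R] [IsLocalRing R] [IsNoetherianRing A] [Module.Flat R A] {f : A}

theorem mk_mem_nonZeroDivisors_of_maximalIdeal
    (hmA : (maximalIdeal R).map (algebraMap R A) ≤ Ideal.jacobson ⊥)
    (hf : Ideal.Quotient.mk ((maximalIdeal R).map (algebraMap R A)) f ∈ nonZeroDivisors _)
    (I : Ideal R) : Ideal.Quotient.mk (I.map (algebraMap R A)) f ∈ nonZeroDivisors _ :=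
  (injective_rTensor_mulLeft_quotient_iff f I).mp <|
    injective_rTensor_quotient_of_maximalIdeal _ hmA
      ((injective_rTensor_mulLeft_quotient_iff f _).mpr hf) I

theorem mem_nonZeroDivisors_of_maximalIdeal
    (hmA : (maximalIdeal R).map (algebraMap R A) ≤ Ideal.jacobson ⊥)
    (hf : Ideal.Quotient.mk ((maximalIdeal R).map (algebraMap R A)) f ∈ nonZeroDivisors _) :
    f ∈ nonZeroDivisors A := by
  have h := mk_mem_nonZeroDivisors_of_maximalIdeal hmA hf ⊥
  rw [mem_nonZeroDivisors_iff_left, Ideal.Quotient.mk_surjective.forall] at h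
  simp_rw [← map_mul, Ideal.Quotient.eq_zero_iff_mem, Ideal.map_bot, Ideal.mem_bot] at h
  rwa [mem_nonZeroDivisors_iff_left]

theorem flat_quotient_span_singleton_of_maximalIdeal
    (hmA : (maximalIdeal R).map (algebraMap R A) ≤ Ideal.jacobson ⊥)
    (hf : Ideal.Quotient.mk ((maximalIdeal R).map (algebraMap R A)) f ∈ nonZeroDivisors _) :
    Module.Flat R (A ⧸ Ideal.span {f}) := by
  have hexact : Function.Exact (mulLeft R f)
      (Ideal.Quotient.mkₐ R (Ideal.span {f})).toLinearMap := fun a ↦ by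
    rw [AlgHom.toLinearMap_apply, Ideal.Quotient.mkₐ_eq_mk, Ideal.Quotient.eq_zero_iff_dvd]
    exact exists_congr fun _ ↦ eq_comm
  exact flat_of_exact_of_injective_rTensor_quotient hexact (Ideal.Quotient.mkₐ_surjective R _)
    fun I ↦ (injective_rTensor_mulLeft_quotient_iff f I).mpr
      (mk_mem_nonZeroDivisors_of_maximalIdeal hmA hf I)

end NonZeroDivisor

lemma height_map_of_hasGoingDown {R A : Type*} [CommRing R] [CommRing A] [IsNoetherianRing R]
    [IsNoetherianRing A] [Algebra R A] [Algebra.HasGoingDown R A] (p : Ideal R) [p.IsPrime]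
    [hq : (p.map (algebraMap R A)).IsPrime] : (p.map (algebraMap R A)).height = p.height := by
  have hover : (p.map (algebraMap R A)).LiesOver p := by
    obtain ⟨P, hPq, _, hP⟩ := (p.map (algebraMap R A)).exists_ideal_le_liesOver_of_le
      (p := p) (q := (p.map (algebraMap R A)).under R) Ideal.le_comap_map
    have hqP : p.map (algebraMap R A) ≤ P := Ideal.map_le_iff_le_comap.mpr hP.over.le
    rwa [← le_antisymm hPq hqP]
  have := Ideal.Quotient.nontrivial_iff.mpr hq.ne_top
  rw [Ideal.height_eq_height_add_of_liesOver_of_hasGoingDown p, Ideal.map_quotient_self,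
    Ideal.height_bot, add_zero]

theorem flat_local_map_with_prime_fiber_ideal_general {R A : Type*} [CommRing R] [CommRing A]
    [IsNoetherianRing R] [IsNoetherianRing A] [IsLocalRing R] [Algebra R A] [Module.Flat R A]
    (q : Ideal A) (hq : q.IsPrime) (hqeq : q = Ideal.map (algebraMap R A) (maximalIdeal R))
    (hqjac : q ≤ Ideal.jacobson ⊥) :
    ringKrullDim (Localization.AtPrime q) = ringKrullDim R ∧
    ∀ f ∉ q, f ∈ nonZeroDivisors A ∧ Module.Flat R (A ⧸ Ideal.span {f}) := by
  subst hqeq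
  refine ⟨?_, fun f hfq ↦ ?_⟩
  · rw [IsLocalization.AtPrime.ringKrullDim_eq_height ((maximalIdeal R).map (algebraMap R A)),
      height_map_of_hasGoingDown, maximalIdeal_height_eq_ringKrullDim]
  · have hf : Ideal.Quotient.mk (Ideal.map (algebraMap R A) (maximalIdeal R)) f ∈
        nonZeroDivisors _ :=
      mem_nonZeroDivisors_of_ne_zero (mt Ideal.Quotient.eq_zero_iff_mem.mp hfq)
    exact ⟨mem_nonZeroDivisors_of_maximalIdeal hqjac hf,
      flat_quotient_span_singleton_of_maximalIdeal hqjac hf⟩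

/-- **Flat local maps with prime closed-fiber ideal.**
Let `R → A` be a flat local homomorphism of Noetherian local rings such that
`q := m_R·A` is a prime ideal of `A`.  Then the height of `q` (the Krull dimension of
`A_q`) equals `dim R`, every `f ∈ m_A − q` is a nonzerodivisor on `A`, and for every
such `f` the induced map `R → A/fA` is flat. -/
theorem flat_local_map_with_prime_fiber_ideal
    {R A : Type*} [CommRing R] [CommRing A] [IsNoetherianRing R] [IsNoetherianRing A]
    [IsLocalRing R] [IsLocalRing A] [Algebra R A] [IsLocalHom (algebraMap R A)]
    [Module.Flat R A]
    (q : Ideal A) (hq : q.IsPrime)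
    (hqeq : q = Ideal.map (algebraMap R A) (IsLocalRing.maximalIdeal R)) :
    (haveI := hq; ringKrullDim (Localization.AtPrime q) = ringKrullDim R) ∧
    ∀ f ∈ IsLocalRing.maximalIdeal A, f ∉ q →
      f ∈ nonZeroDivisors A ∧ Module.Flat R (A ⧸ Ideal.span {f}) := by
  obtain ⟨hdim, hflat⟩ := flat_local_map_with_prime_fiber_ideal_general q hq hqeq
    ((IsLocalRing.le_maximalIdeal hq.ne_top).trans (IsLocalRing.maximalIdeal_le_jacobson _))
  exact ⟨hdim, fun f _ ↦ hflat f⟩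
end
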